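/- Let X be a uniformizable Alexandroff topological space. Then X is a functional Alexandroff space (i.e., its topology coincides with the functional Alexandroff topology of some self-map f : X → X) if and only if the smallest open neighbourhood V(a) of each point a ∈ X is a finite set. -/

import Mathlib

open Set

variable {X : Type*}

/-- `V a` : the intersection of all open neighbourhoods of `a`. -/
def V [TopologicalSpace X] (a : X) : Set X :=
  ⋂₀ {U : Set X | IsOpen U ∧ a ∈ U}

/-- A topological space is uniformizable if its topology is induced by some
uniform structure. -/
def Uniformizable (X : Type*) [t : TopologicalSpace X] : Prop :=
  ∃ u : UniformSpace X, u.toTopologicalSpace = t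

/-- `Vf f a = ⋃ₙ f⁻ⁿ(a)` : the union of the preimages of `{a}` under all
iterates of `f` (including the 0-th iterate). -/
def Vf (f : X → X) (a : X) : Set X :=
  ⋃ n : ℕ, (f^[n]) ⁻¹' {a}

/-- The functional Alexandroff topology on `X` corresponding to `f`, generated
by the basis `{Vf f a : a ∈ X}`. -/
def funcAlexTop (f : X → X) : TopologicalSpace X :=
  TopologicalSpace.generateFrom {S : Set X | ∃ a : X, S = Vf f a}

/-- A topological space is functional Alexandroff if its topology is the
functional Alexandroff topology corresponding to some self-map. -/
def IsFunctionalAlexandroff (X : Type*) [t : TopologicalSpace X] : Prop :=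
  ∃ f : X → X, t = funcAlexTop f

theorem mem_V_iff_specializes [TopologicalSpace X] {a x : X} : x ∈ V a ↔ x ⤳ a := by
  simp [V, specializes_iff_forall_open]

theorem Uniformizable.r0Space [t : TopologicalSpace X] (hU : Uniformizable X) : R0Space X := by
  obtain ⟨u, rfl⟩ := hU
  infer_instance

theorem mem_V_comm [TopologicalSpace X] [R0Space X] {a x : X} : x ∈ V a ↔ a ∈ V x := by
  simp only [mem_V_iff_specializes, specializes_comm]

theorem V_eq_of_mem [TopologicalSpace X] [R0Space X] {a x : X} (h : x ∈ V a) : V x = V a := by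
  ext y
  simp only [mem_V_iff_specializes] at h ⊢
  exact ⟨fun hy => hy.trans h, fun hy => hy.trans h.symm⟩

theorem mem_Vf {f : X → X} {a x : X} : x ∈ Vf f a ↔ ∃ n, f^[n] x = a := by
  simp [Vf]

theorem V_funcAlexTop (f : X → X) (a : X) : @V X (funcAlexTop f) a = Vf f a := by
  let := funcAlexTop f
  apply Subset.antisymm
  · exact sInter_subset_of_mem
      ⟨TopologicalSpace.isOpen_generateFrom_of_mem ⟨a, rfl⟩, mem_Vf.2 ⟨0, rfl⟩⟩
  · intro x hx
    obtain ⟨n, hn⟩ := mem_Vf.1 hx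
    refine mem_V_iff_specializes.2 (TopologicalSpace.nhds_generateFrom.trans_le
      (le_of_le_of_eq (biInf_mono ?_) TopologicalSpace.nhds_generateFrom.symm))
    rintro s ⟨ha, b, rfl⟩
    obtain ⟨m, hm⟩ := mem_Vf.1 ha
    refine ⟨mem_Vf.2 ⟨m + n, ?_⟩, b, rfl⟩
    rw [Function.iterate_add_apply, hn, hm]

theorem eq_funcAlexTop [t : TopologicalSpace X] (hA : ∀ a : X, IsOpen (V a)) {f : X → X}
    (hf : ∀ a, Vf f a = V a) : t = funcAlexTop f := by
  refine TopologicalSpace.IsTopologicalBasis.eq_generateFrom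
    (TopologicalSpace.isTopologicalBasis_of_isOpen_of_nhds ?_ ?_)
  · rintro _ ⟨a, rfl⟩
    exact hf a ▸ hA a
  · intro a U ha hU
    refine ⟨_, ⟨a, rfl⟩, mem_Vf.2 ⟨0, rfl⟩, ?_⟩
    rw [hf]
    exact sInter_subset_of_mem ⟨hU, ha⟩

theorem finite_Vf_of_symmetric {f : X → X} (hf : ∀ a x, x ∈ Vf f a → a ∈ Vf f x) (a : X) :
    (Vf f a).Finite := by
  obtain ⟨n, hn⟩ := mem_Vf.1 (hf (f a) a (mem_Vf.2 ⟨1, rfl⟩))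
  have hp : Function.IsPeriodicPt f (n + 1) a := hn
  refine ((finite_lt_nat (n + 1)).image fun m => f^[m] a).subset fun x hx => ?_
  obtain ⟨m, rfl⟩ := mem_Vf.1 (hf a x hx)
  exact ⟨m % (n + 1), Nat.mod_lt _ n.succ_pos, hp.iterate_mod_apply m⟩

theorem exists_Vf_eq_V [TopologicalSpace X] [R0Space X] (hfin : ∀ a : X, (V a).Finite) :
    ∃ f : X → X, ∀ a, Vf f a = V a := by
  have hex (s : Set X) : ∃ σ : Equiv.Perm X, s.Finite → σ.IsCycleOn s := by
    by_cases hs : s.Finite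
    · obtain ⟨σ, hσ, -⟩ := hs.countable.exists_cycleOn
      exact ⟨σ, fun _ => hσ⟩
    · exact ⟨1, fun h => absurd h hs⟩
  choose g hg' using hex
  have hg (x : X) : (g (V x)).IsCycleOn (V x) := hg' _ (hfin x)
  have mem_self (x : X) : x ∈ V x := mem_V_iff_specializes.2 specializes_rfl
  let f (x : X) : X := g (V x) x
  have hiter (n : ℕ) (x : X) : f^[n] x = (g (V x) ^ n) x ∧ f^[n] x ∈ V x := by
    induction n with
    | zero => exact ⟨rfl, mem_self x⟩
    | succ n ih =>
      have hstep : f^[n + 1] x = g (V x) (f^[n] x) := by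
        rw [Function.iterate_succ_apply']
        simp only [f, V_eq_of_mem ih.2]
      exact ⟨by rw [hstep, ih.1, pow_succ', Equiv.Perm.mul_apply],
        hstep ▸ (hg x).1.mapsTo ih.2⟩
  refine ⟨f, fun a => Subset.antisymm (fun x hx => ?_) fun x hx => ?_⟩
  · obtain ⟨n, rfl⟩ := mem_Vf.1 hx
    exact mem_V_comm.1 (hiter n x).2
  · obtain ⟨n, hn⟩ := (hg x).exists_pow_eq' (hfin x) (mem_self x) (mem_V_comm.1 hx)
    exact mem_Vf.2 ⟨n, (hiter n x).1.trans hn⟩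

/-- A uniformizable Alexandroff space is functional Alexandroff iff the
smallest open neighbourhood `V a` of each point is finite. -/
theorem stmt9 [TopologicalSpace X] (hA : ∀ a : X, IsOpen (V a))
    (hU : Uniformizable X) :
    IsFunctionalAlexandroff X ↔ ∀ a : X, (V a).Finite := by
  have := hU.r0Space
  constructor
  · rintro ⟨f, rfl⟩ a
    have hs (a x : X) (hx : x ∈ Vf f a) : a ∈ Vf f x := by
      rw [← V_funcAlexTop] at hx ⊢
      exact @mem_V_comm X (funcAlexTop f) this a x |>.1 hx
    rw [V_funcAlexTop]
    exact finite_Vf_of_symmetric hs a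
  · intro hfin
    obtain ⟨f, hf⟩ := exists_Vf_eq_V hfin
    exact ⟨f, eq_funcAlexTop hA hf⟩
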